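/- arXiv:2009.08008 — 5 statements merged into one kernel-verified Lean document; each statement's English description precedes it below -/
import Mathlib

section
/- Nonlocal Gauss theorem (tensor version): for every measurable matrix-valued two-point function v : ℝⁿ × ℝⁿ → ℝ^{n×n} such that (x,x') ↦ (v(x,x') + v(x',x))·α(x,x') is integrable on (Ω ∪ Ω_τ) × (Ω ∪ Ω_τ), one has ∫_Ω D(v)(x) dx = ∫_{Ω_τ} N(v)(x) dx, an identity of vectors in ℝⁿ. -/
open MeasureTheory Matrix

/-- Nonlocal divergence operator `D(v)(x) = ∫_{ℝⁿ} (v(x,x') + v(x',x))·α(x,x') dx'`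
for matrix-valued two-point functions (contraction of the last index with `α`). -/
noncomputable def Dop {n : ℕ} (α : (Fin n → ℝ) → (Fin n → ℝ) → (Fin n → ℝ))
    (v : (Fin n → ℝ) → (Fin n → ℝ) → Matrix (Fin n) (Fin n) ℝ)
    (x : Fin n → ℝ) : Fin n → ℝ :=
  ∫ x', (v x x' + v x' x).mulVec (α x x')

/-- Nonlocal interaction operator
`N(v)(x) = −∫_{Ω∪Ω_τ} (v(x,x') + v(x',x))·α(x,x') dx'`. -/
noncomputable def Nop {n : ℕ} (Ω Ωτ : Set (Fin n → ℝ))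
    (α : (Fin n → ℝ) → (Fin n → ℝ) → (Fin n → ℝ))
    (v : (Fin n → ℝ) → (Fin n → ℝ) → Matrix (Fin n) (Fin n) ℝ)
    (x : Fin n → ℝ) : Fin n → ℝ :=
  -∫ x' in Ω ∪ Ωτ, (v x x' + v x' x).mulVec (α x x')

/-! The kernel `f x x' = (v x x' + v x' x) *ᵥ α x x'` is the product of a symmetric and an
antisymmetric factor, hence antisymmetric, so by Fubini its double integral over
`(Ω ∪ Ωτ) × (Ω ∪ Ωτ)` vanishes. Splitting the outer integral gives
`∫_Ω ∫_{Ω ∪ Ωτ} f = -∫_{Ωτ} ∫_{Ω ∪ Ωτ} f`. On `Ω` the inner integral may be taken over the whole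
space, because `α x x'` vanishes for `x ∈ Ω` and `x' ∉ Ω ∪ Ωτ`. -/

theorem add_swap_mulVec_antisymm {X m n R : Type*} [Fintype n] [NonUnitalNonAssocRing R]
    {α : X → X → n → R} (hα : ∀ x y, α x y = -α y x) (v : X → X → Matrix m n R) (x y : X) :
    (v x y + v y x) *ᵥ α x y = -((v y x + v x y) *ᵥ α y x) := by
  rw [hα x y, mulVec_neg, add_comm]

section AntisymmetricKernel

variable {X E : Type*} [MeasurableSpace X] {μ : Measure X} [SFinite μ]
  [NormedAddCommGroup E] [NormedSpace ℝ E] {f : X → X → E} {s t : Set X}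

theorem integral_integral_eq_zero_of_antisymm (hf : ∀ x y, f x y = -f y x)
    (hint : Integrable f.uncurry (μ.prod μ)) : ∫ x, ∫ y, f x y ∂μ ∂μ = 0 := by
  have : IsAddTorsionFree E := .of_isTorsionFree ℝ E
  refine self_eq_neg.mp ?_
  calc ∫ x, ∫ y, f x y ∂μ ∂μ = ∫ y, ∫ x, f x y ∂μ ∂μ := integral_integral_swap hint
    _ = ∫ y, ∫ x, -f y x ∂μ ∂μ := by simp only [← hf]
    _ = -∫ y, ∫ x, f y x ∂μ ∂μ := by simp only [integral_neg]

theorem setIntegral_setIntegral_union_eq_neg_of_antisymm (ht : MeasurableSet t)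
    (hst : Disjoint s t) (hf : ∀ x y, f x y = -f y x)
    (hint : IntegrableOn f.uncurry ((s ∪ t) ×ˢ (s ∪ t)) (μ.prod μ)) :
    ∫ x in s, ∫ y in s ∪ t, f x y ∂μ ∂μ = -∫ x in t, ∫ y in s ∪ t, f x y ∂μ ∂μ := by
  rw [IntegrableOn, ← Measure.prod_restrict] at hint
  have hinner : IntegrableOn (fun x ↦ ∫ y in s ∪ t, f x y ∂μ) (s ∪ t) μ := hint.integral_prod_left
  refine eq_neg_of_add_eq_zero_left ?_
  rw [← setIntegral_union hst ht hinner.left_of_union hinner.right_of_union]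
  exact integral_integral_eq_zero_of_antisymm hf hint

theorem nonlocal_gauss_theorem_general [CompleteSpace E] (hs : MeasurableSet s)
    (ht : MeasurableSet t) (hst : Disjoint s t) (hf : ∀ x y, f x y = -f y x)
    (hsupp : ∀ x ∈ s, ∀ y ∉ s ∪ t, f x y = 0)
    (hint : IntegrableOn f.uncurry ((s ∪ t) ×ˢ (s ∪ t)) (μ.prod μ)) :
    ∫ x in s, ∫ y, f x y ∂μ ∂μ = ∫ x in t, -∫ y in s ∪ t, f x y ∂μ ∂μ := by
  have hlocal : ∀ x ∈ s, ∫ y, f x y ∂μ = ∫ y in s ∪ t, f x y ∂μ := fun x hx ↦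
    (setIntegral_eq_integral_of_forall_compl_eq_zero (hsupp x hx)).symm
  rw [setIntegral_congr_fun hs hlocal, integral_neg]
  exact setIntegral_setIntegral_union_eq_neg_of_antisymm ht hst hf hint

end AntisymmetricKernel

/-- **Nonlocal Gauss theorem (tensor version).** -/
theorem nonlocal_gauss_theorem {n : ℕ} (hn : 1 ≤ n)
    (Ω Ωτ : Set (Fin n → ℝ)) (hΩ : MeasurableSet Ω) (hΩτ : MeasurableSet Ωτ)
    (hdisj : Disjoint Ω Ωτ)
    (α : (Fin n → ℝ) → (Fin n → ℝ) → (Fin n → ℝ))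
    (hαmeas : Measurable fun p : (Fin n → ℝ) × (Fin n → ℝ) => α p.1 p.2)
    (hαanti : ∀ x x', α x x' = -α x' x)
    (hαsupp : ∀ x x', x ∈ Ω ∪ Ωτ → x' ∉ Ω ∪ Ωτ → α x x' = 0)
    (v : (Fin n → ℝ) → (Fin n → ℝ) → Matrix (Fin n) (Fin n) ℝ)
    (hvmeas : ∀ i j, Measurable fun p : (Fin n → ℝ) × (Fin n → ℝ) => v p.1 p.2 i j)
    (hint : IntegrableOn
      (fun p : (Fin n → ℝ) × (Fin n → ℝ) =>
        (v p.1 p.2 + v p.2 p.1).mulVec (α p.1 p.2))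
      ((Ω ∪ Ωτ) ×ˢ (Ω ∪ Ωτ))) :
    ∫ x in Ω, Dop α v x = ∫ x in Ωτ, Nop Ω Ωτ α v x := by
  exact nonlocal_gauss_theorem_general hΩ hΩτ hdisj (add_swap_mulVec_antisymm hαanti v)
    (fun x hx x' hx' ↦ by rw [hαsupp x x' (.inl hx) hx', mulVec_zero]) hint
end

section
/- Product rule for the nonlocal divergence operator: let χ : ℝⁿ → ℝⁿ and Ψ : ℝⁿ × ℝⁿ → ℝ^{n×n} be measurable, and let κ be the vector-valued two-point function with components κ_j(x,x') = Σ_i χ_i(x) Ψ_{ij}(x,x'). Then for every x ∈ Ω ∪ Ω_τ, D(κ)(x) = χ(x)·D(Ψ)(x) + ∫_{Ω∪Ω_τ} Σ_{i,j} (χ_i(x') − χ_i(x)) Ψ_{ij}(x',x) α_j(x,x') dx'. -/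
open MeasureTheory Matrix

/-- Nonlocal divergence operator
`D(v)(x) = ∫_{ℝⁿ} (v(x,x') + v(x',x))·α(x,x') dx'` for vector-valued two-point
functions (contraction of the last = only index with `α`). -/
noncomputable def DopV {n : ℕ} (α : (Fin n → ℝ) → (Fin n → ℝ) → (Fin n → ℝ))
    (v : (Fin n → ℝ) → (Fin n → ℝ) → (Fin n → ℝ))
    (x : Fin n → ℝ) : ℝ :=
  ∫ x', (v x x' + v x' x) ⬝ᵥ α x x'

/-! Writing `χ(x') = χ(x) + (χ(x') − χ(x))` in the second half of `κ(x,x') + κ(x',x)` splits the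
integrand of `D(κ)(x)` into that of `χ(x)·D(Ψ)(x)` and a correction. The correction is integrable as
a difference of integrable functions, and vanishes wherever `α(x,·)` does. -/

section DotProduct

variable {R m k : Type*} [Fintype m] [Fintype k]

theorem dotProduct_mulVec_eq_sum_sum [NonUnitalSemiring R] (v : m → R) (A : Matrix m k R)
    (w : k → R) : v ⬝ᵥ A *ᵥ w = ∑ i, ∑ j, v i * A i j * w j :=
  (dot_mulVec_eq_sum_sum v A w).trans Finset.sum_comm

theorem vecMul_add_vecMul_dotProduct [NonUnitalRing R] (u v : m → R) (A B : Matrix m k R)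
    (w : k → R) :
    (u ᵥ* A + v ᵥ* B) ⬝ᵥ w = u ⬝ᵥ (A + B) *ᵥ w + (v - u) ⬝ᵥ B *ᵥ w := by
  simp only [dotProduct_mulVec, vecMul_add, sub_vecMul, add_dotProduct, sub_dotProduct]
  abel

end DotProduct

section Integral

variable {X R m k : Type*} [Fintype m] [Fintype k] [MeasurableSpace X] {μ : Measure X}
  [NormedRing R]

theorem integrable_const_dotProduct {f : X → m → R} (hf : Integrable f μ) (v : m → R) :
    Integrable (fun x => v ⬝ᵥ f x) μ :=
  integrable_finsetSum _ fun i _ => (hf.eval i).const_mul (v i)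

variable [NormedAlgebra ℝ R] [CompleteSpace R]

theorem integral_const_dotProduct {f : X → m → R} (hf : Integrable f μ) (v : m → R) :
    ∫ x, v ⬝ᵥ f x ∂μ = v ⬝ᵥ ∫ x, f x ∂μ :=
  calc
    ∫ x, v ⬝ᵥ f x ∂μ = ∑ i, ∫ x, v i * f x i ∂μ :=
      integral_finsetSum _ fun i _ => (hf.eval i).const_mul (v i)
    _ = ∑ i, v i * (∫ x, f x ∂μ) i := by
      simp only [integral_const_mul_of_integrable (hf.eval _), eval_integral hf.eval]

theorem nonlocal_div_product_rule_general {S : Set X} {α : X → X → k → R} {χ : X → m → R}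
    {Ψ : X → X → Matrix m k R} {x : X} (hα : ∀ᵐ x' ∂μ, x' ∉ S → α x x' = 0)
    (hκ : Integrable (fun x' => (χ x ᵥ* Ψ x x' + χ x' ᵥ* Ψ x' x) ⬝ᵥ α x x') μ)
    (hΨ : Integrable (fun x' => (Ψ x x' + Ψ x' x) *ᵥ α x x') μ) :
    ∫ x', (χ x ᵥ* Ψ x x' + χ x' ᵥ* Ψ x' x) ⬝ᵥ α x x' ∂μ
      = χ x ⬝ᵥ ∫ x', (Ψ x x' + Ψ x' x) *ᵥ α x x' ∂μ
        + ∫ x' in S, ∑ i, ∑ j, (χ x' i - χ x i) * Ψ x' x i j * α x x' j ∂μ := by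
  let main : X → R := fun x' => χ x ⬝ᵥ (Ψ x x' + Ψ x' x) *ᵥ α x x'
  let correction : X → R := fun x' => (χ x' - χ x) ⬝ᵥ Ψ x' x *ᵥ α x x'
  have split (x' : X) :
      (χ x ᵥ* Ψ x x' + χ x' ᵥ* Ψ x' x) ⬝ᵥ α x x' = main x' + correction x' :=
    vecMul_add_vecMul_dotProduct ..
  have main_integrable : Integrable main μ := integrable_const_dotProduct hΨ (χ x)
  have correction_integrable : Integrable correction μ := by
    simp only [split] at hκ
    exact (integrable_add_iff_integrable_right' main_integrable).mp hκ
  have correction_eq_zero : ∀ᵐ x' ∂μ, x' ∉ S → correction x' = 0 := by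
    filter_upwards [hα] with x' hx' hx'S
    simp only [correction, hx' hx'S, mulVec_zero, dotProduct_zero]
  calc
    ∫ x', (χ x ᵥ* Ψ x x' + χ x' ᵥ* Ψ x' x) ⬝ᵥ α x x' ∂μ
        = ∫ x', main x' ∂μ + ∫ x', correction x' ∂μ := by
      simp only [split, integral_add main_integrable correction_integrable]
    _ = χ x ⬝ᵥ ∫ x', (Ψ x x' + Ψ x' x) *ᵥ α x x' ∂μ + ∫ x' in S, correction x' ∂μ := by
      rw [integral_const_dotProduct hΨ,
        setIntegral_eq_integral_of_ae_compl_eq_zero correction_eq_zero]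
    _ = _ := by
      simp only [correction, dotProduct_mulVec_eq_sum_sum, Pi.sub_apply]

end Integral

/-- **Product rule for the nonlocal divergence operator**:
for `κ_j(x,x') = Σ_i χ_i(x) Ψ_{ij}(x,x')` and every `x ∈ Ω ∪ Ω_τ`,
`D(κ)(x) = χ(x)·D(Ψ)(x) + ∫_{Ω∪Ω_τ} Σ_{i,j} (χ_i(x') − χ_i(x)) Ψ_{ij}(x',x) α_j(x,x') dx'`. -/
theorem nonlocal_div_product_rule {n : ℕ} (hn : 1 ≤ n)
    (Ω Ωτ : Set (Fin n → ℝ)) (hΩ : MeasurableSet Ω) (hΩτ : MeasurableSet Ωτ)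
    (hdisj : Disjoint Ω Ωτ)
    (α : (Fin n → ℝ) → (Fin n → ℝ) → (Fin n → ℝ))
    (hαmeas : Measurable fun p : (Fin n → ℝ) × (Fin n → ℝ) => α p.1 p.2)
    (hαanti : ∀ x x', α x x' = -α x' x)
    (hαsupp : ∀ x x', x ∈ Ω ∪ Ωτ → x' ∉ Ω ∪ Ωτ → α x x' = 0)
    (χ : (Fin n → ℝ) → (Fin n → ℝ)) (hχ : Measurable χ)
    (Ψ : (Fin n → ℝ) → (Fin n → ℝ) → Matrix (Fin n) (Fin n) ℝ)
    (hΨ : ∀ i j, Measurable fun p : (Fin n → ℝ) × (Fin n → ℝ) => Ψ p.1 p.2 i j)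
    (hint1 : ∀ x, Integrable fun x' =>
      (Matrix.vecMul (χ x) (Ψ x x') + Matrix.vecMul (χ x') (Ψ x' x)) ⬝ᵥ α x x')
    (hint2 : ∀ x, Integrable fun x' => (Ψ x x' + Ψ x' x).mulVec (α x x'))
    (hint3 : ∀ x, IntegrableOn
      (fun x' => ∑ i, ∑ j, (χ x' i - χ x i) * Ψ x' x i j * α x x' j) (Ω ∪ Ωτ)) :
    ∀ x ∈ Ω ∪ Ωτ,
      DopV α (fun y y' => Matrix.vecMul (χ y) (Ψ y y')) x
        = χ x ⬝ᵥ Dop α Ψ x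
          + ∫ x' in Ω ∪ Ωτ, ∑ i, ∑ j, (χ x' i - χ x i) * Ψ x' x i j * α x x' j := by
  intro x hx
  exact nonlocal_div_product_rule_general (.of_forall fun x' => hαsupp x x' hx) (hint1 x) (hint2 x)
end

section
/- Truncated-convolution integration-by-parts lemma: let t₀ ≤ t be real numbers and f, g : ℝ → ℝ twice continuously differentiable. Then ∫_{t₀}^{t} f(τ) g''(t − τ + t₀) dτ − ∫_{t₀}^{t} g(τ) f''(t − τ + t₀) dτ = f(t₀) g'(t) + f'(t₀) g(t) − f(t) g'(t₀) − f'(t) g(t₀). -/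
open intervalIntegral

/-!
Integrating `∫ f(τ) g''(t₀ + t - τ) dτ` by parts twice moves both derivatives onto `f`:
differentiating in `τ` through the reflection `τ ↦ t₀ + t - τ` contributes a sign that cancels the
usual one. The reflection preserves `[t₀, t]`, so substituting it turns the remaining integral into
`∫ f''(t₀ + t - τ) g(τ) dτ`, and only the boundary terms are left.
-/

section Deriv

variable {𝕜 E : Type*} [NontriviallyNormedField 𝕜] [NormedAddCommGroup E] [NormedSpace 𝕜 E]
  {u : 𝕜 → E}

theorem hasDerivWithinAt_deriv_of_differentiable (hu : Differentiable 𝕜 u) (s : Set 𝕜) :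
    ∀ x ∈ s, HasDerivWithinAt u (deriv u x) s x :=
  fun x _ ↦ (hu x).hasDerivAt.hasDerivWithinAt

theorem continuous_deriv_deriv_of_contDiff_two (hu : ContDiff 𝕜 2 u) :
    Continuous (deriv (deriv u)) :=
  ContDiff.continuous_deriv_one (ContDiff.deriv' hu)

end Deriv

section Reflection

open MeasureTheory Set
open scoped Interval

theorem mapsTo_add_sub_uIcc {α : Type*} [AddCommGroup α] [LinearOrder α] [IsOrderedAddMonoid α]
    (a b : α) : MapsTo (fun x ↦ a + b - x) [[a, b]] [[a, b]] := by
  rw [mapsTo_iff_image_subset, image_const_sub_uIcc, add_sub_cancel_left, add_sub_cancel_right,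
    uIcc_comm]

variable {E : Type*} [NormedAddCommGroup E] {a b : ℝ}

theorem intervalIntegrable_comp_add_sub {F : ℝ → E} (hF : IntervalIntegrable F volume a b) :
    IntervalIntegrable (fun x ↦ F (a + b - x)) volume a b := by
  simpa only [add_sub_cancel_left, add_sub_cancel_right] using hF.symm.comp_sub_left (a + b)

variable [NormedSpace ℝ E]

theorem integral_comp_add_sub (F : ℝ → E) : ∫ x in a..b, F (a + b - x) = ∫ x in a..b, F x := by
  rw [integral_comp_sub_left, add_sub_cancel_left, add_sub_cancel_right]

theorem hasDerivWithinAt_comp_add_sub {v : ℝ → E} {v' : E} {x : ℝ}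
    (hv : HasDerivWithinAt v v' [[a, b]] (a + b - x)) :
    HasDerivWithinAt (fun y ↦ v (a + b - y)) (-v') [[a, b]] x := by
  simpa only [neg_smul, one_smul, Function.comp_def] using
    hv.scomp x ((hasDerivWithinAt_id x _).const_sub (a + b)) (mapsTo_add_sub_uIcc a b)

end Reflection

section IntegrationByParts

open MeasureTheory Set
open scoped Interval

variable {A : Type*} [NormedRing A] [NormedAlgebra ℝ A] [CompleteSpace A]

theorem integral_mul_deriv_comp_add_sub_eq {a b : ℝ} {u u' v v' : ℝ → A}
    (hu : ∀ x ∈ [[a, b]], HasDerivWithinAt u (u' x) [[a, b]] x)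
    (hv : ∀ x ∈ [[a, b]], HasDerivWithinAt v (v' x) [[a, b]] x)
    (hu' : IntervalIntegrable u' volume a b) (hv' : IntervalIntegrable v' volume a b) :
    ∫ x in a..b, u x * v' (a + b - x) =
      u a * v b - u b * v a + ∫ x in a..b, u' x * v (a + b - x) := by
  have hv_reflected : ∀ x ∈ [[a, b]],
      HasDerivWithinAt (fun y ↦ v (a + b - y)) (-v' (a + b - x)) [[a, b]] x := fun _ hx ↦
    hasDerivWithinAt_comp_add_sub (hv _ (mapsTo_add_sub_uIcc a b hx))
  have by_parts := integral_mul_deriv_eq_deriv_mul_of_hasDerivWithinAt hu hv_reflected hu'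
    (intervalIntegrable_comp_add_sub hv').neg
  simp only [mul_neg, intervalIntegral.integral_neg, add_sub_cancel_left,
    add_sub_cancel_right] at by_parts
  rw [neg_eq_iff_eq_neg.1 by_parts]
  abel

theorem truncated_convolution_integration_by_parts_general
    {t₀ t : ℝ} {f f' f'' g g' g'' : ℝ → A}
    (hf : ∀ x ∈ [[t₀, t]], HasDerivWithinAt f (f' x) [[t₀, t]] x)
    (hf' : ∀ x ∈ [[t₀, t]], HasDerivWithinAt f' (f'' x) [[t₀, t]] x)
    (hf'' : IntervalIntegrable f'' volume t₀ t)
    (hg : ∀ x ∈ [[t₀, t]], HasDerivWithinAt g (g' x) [[t₀, t]] x)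
    (hg' : ∀ x ∈ [[t₀, t]], HasDerivWithinAt g' (g'' x) [[t₀, t]] x)
    (hg'' : IntervalIntegrable g'' volume t₀ t) :
    (∫ τ in t₀..t, f τ * g'' (t - τ + t₀)) - (∫ τ in t₀..t, f'' (t - τ + t₀) * g τ)
      = f t₀ * g' t + f' t₀ * g t - f t * g' t₀ - f' t * g t₀ := by
  have hf'_int : IntervalIntegrable f' volume t₀ t :=
    ContinuousOn.intervalIntegrable fun x hx ↦ (hf' x hx).continuousWithinAt
  have hg'_int : IntervalIntegrable g' volume t₀ t :=
    ContinuousOn.intervalIntegrable fun x hx ↦ (hg' x hx).continuousWithinAt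
  have reflected : ∫ τ in t₀..t, f'' τ * g (t₀ + t - τ) = ∫ τ in t₀..t, f'' (t₀ + t - τ) * g τ := by
    simpa only [sub_sub_cancel] using
      (integral_comp_add_sub (a := t₀) (b := t) fun τ ↦ f'' τ * g (t₀ + t - τ)).symm
  simp only [sub_add_eq_add_sub, add_comm t t₀]
  rw [integral_mul_deriv_comp_add_sub_eq hf hg' hf'_int hg'',
    integral_mul_deriv_comp_add_sub_eq hf' hg hf'' hg'_int, reflected]
  abel

end IntegrationByParts

/-- **Truncated-convolution integration-by-parts lemma**: for `t₀ ≤ t` and twice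
continuously differentiable `f, g : ℝ → ℝ`,
`∫_{t₀}^{t} f(τ) g''(t − τ + t₀) dτ − ∫_{t₀}^{t} g(τ) f''(t − τ + t₀) dτ
  = f(t₀) g'(t) + f'(t₀) g(t) − f(t) g'(t₀) − f'(t) g(t₀)`. -/
theorem truncated_convolution_integration_by_parts
    (t₀ t : ℝ) (h : t₀ ≤ t) (f g : ℝ → ℝ)
    (hf : ContDiff ℝ 2 f) (hg : ContDiff ℝ 2 g) :
    (∫ τ in t₀..t, f τ * deriv (deriv g) (t - τ + t₀))
      - (∫ τ in t₀..t, g τ * deriv (deriv f) (t - τ + t₀))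
      = f t₀ * deriv g t + deriv f t₀ * g t - f t * deriv g t₀ - deriv f t * g t₀ := by
  simpa only [mul_comm (g _)] using truncated_convolution_integration_by_parts_general
    (hasDerivWithinAt_deriv_of_differentiable (hf.differentiable two_ne_zero) _)
    (hasDerivWithinAt_deriv_of_differentiable hf.differentiable_deriv_two _)
    ((continuous_deriv_deriv_of_contDiff_two hf).intervalIntegrable t₀ t)
    (hasDerivWithinAt_deriv_of_differentiable (hg.differentiable two_ne_zero) _)
    (hasDerivWithinAt_deriv_of_differentiable hg.differentiable_deriv_two _)
    ((continuous_deriv_deriv_of_contDiff_two hg).intervalIntegrable t₀ t)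
end

section
/- Laplace inversion via the Fourier cosine transform: let a ∈ ℝ and let f : ℝ → ℝ satisfy f(t) = 0 for t < 0, f continuous on (0,∞), t ↦ e^{−at} f(t) integrable on [0,∞), and ω ↦ Re F(a + iω) integrable on [0,∞), where F(s) = ∫₀^∞ f(t) e^{−st} dt. Then for every t > 0, f(t) = (2 e^{at}/π) ∫₀^∞ Re F(a + iω) cos(ωt) dω. -/
open MeasureTheory

/-!
Write `g u = e^{-au} f u`. On the line `Re s = a`, the real part of the Laplace transform of `f` is
the cosine transform of `g`, so the theorem is the inversion of the cosine transform. The latter is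
Fourier inversion for the even function `u ↦ g |u|`: its Fourier transform at `ξ` is twice the
cosine transform of `g` at `2πξ`, which is again even, so the inverse Fourier transform is computed
by a second cosine transform.
-/

open Set Real
open scoped FourierTransform

section HalfLine

variable {E : Type*} [NormedAddCommGroup E]

theorem integrable_comp_abs {g : ℝ → E} (hg : IntegrableOn g (Ioi 0)) :
    Integrable fun u ↦ g |u| := by
  have hpos : IntegrableOn (fun u ↦ g |u|) (Ioi 0) :=
    hg.congr_fun (fun u (hu : 0 < u) ↦ by rw [abs_of_pos hu]) measurableSet_Ioi
  have hneg : IntegrableOn (fun u ↦ g |u|) (Iic 0) := by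
    rw [← integrableOn_Ici_iff_integrableOn_Ioi, ← neg_zero] at hpos
    simpa only [abs_neg] using hpos.comp_neg_Iic
  rw [← integrableOn_univ, ← Iic_union_Ioi (a := (0 : ℝ))]
  exact hneg.union hpos

theorem integral_eq_integral_Ioi_add_comp_neg [NormedSpace ℝ E] {h : ℝ → E} (hh : Integrable h) :
    ∫ u, h u = ∫ u in Ioi 0, (h u + h (-u)) := by
  rw [integral_add hh.integrableOn hh.comp_neg.integrableOn, integral_comp_neg_Ioi, neg_zero,
    add_comm, intervalIntegral.integral_Iic_add_Ioi hh.integrableOn hh.integrableOn]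

end HalfLine

section CosTransform

variable {E : Type*} [NormedAddCommGroup E]

/-- The (unnormalised) Fourier cosine transform `ω ↦ ∫₀^∞ cos (u ω) g(u) du` of a function on the
half-line; the values of `g` on `(-∞, 0]` are ignored. -/
noncomputable def cosTransform [NormedSpace ℝ E] (g : ℝ → E) (ω : ℝ) : E :=
  ∫ u in Ioi 0, cos (u * ω) • g u

section RealScalars

variable [NormedSpace ℝ E]

theorem cosTransform_neg (g : ℝ → E) (ω : ℝ) : cosTransform g (-ω) = cosTransform g ω := by
  simp only [cosTransform, mul_neg, cos_neg]

theorem cosTransform_abs (g : ℝ → E) (ω : ℝ) : cosTransform g |ω| = cosTransform g ω := by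
  rcases abs_choice ω with h | h <;> rw [h]
  exact cosTransform_neg g ω

theorem cosTransform_const_smul (c : ℝ) (g : ℝ → E) (ω : ℝ) :
    cosTransform (fun u ↦ c • g u) ω = c • cosTransform g ω := by
  simp only [cosTransform, smul_comm _ c, integral_smul]

theorem cosTransform_comp_mul_left (g : ℝ → E) {c : ℝ} (hc : 0 < c) (ω : ℝ) :
    cosTransform (fun u ↦ g (c * u)) (c * ω) = c⁻¹ • cosTransform g ω := by
  have key := integral_comp_mul_left_Ioi (fun u ↦ cos (u * ω) • g u) 0 hc
  rw [mul_zero] at key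
  rw [cosTransform, cosTransform, ← key]
  simp only [mul_left_comm, mul_assoc]

end RealScalars

theorem cosTransform_ofReal (g : ℝ → ℝ) (ω : ℝ) :
    cosTransform (fun u ↦ (g u : ℂ)) ω = ((cosTransform g ω : ℝ) : ℂ) := by
  simp only [cosTransform, Complex.real_smul, smul_eq_mul, ← Complex.ofReal_mul,
    integral_complex_ofReal]

variable [NormedSpace ℂ E]

theorem fourier_comp_abs {g : ℝ → E} (hg : IntegrableOn g (Ioi 0)) (ξ : ℝ) :
    𝓕 (fun u ↦ g |u|) ξ = (2 : ℝ) • cosTransform g (2 * π * ξ) := by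
  have hint : Integrable fun u ↦ 𝐞 (-(u * ξ)) • g |u| := by
    simpa [mul_comm] using (Real.fourierIntegral_convergent_iff ξ).2 (integrable_comp_abs hg)
  have euler (θ : ℝ) (x : E) : 𝐞 (-θ) • x + 𝐞 θ • x = (2 : ℝ) • cos (2 * π * θ) • x := by
    rw [Circle.smul_def, Circle.smul_def, ← add_smul, smul_smul, ← Complex.coe_smul]
    simp [Real.fourierChar_apply, Complex.two_cos, add_comm]
  rw [Real.fourier_real_eq, integral_eq_integral_Ioi_add_comp_neg hint, cosTransform,
    ← integral_smul]
  refine setIntegral_congr_fun measurableSet_Ioi fun u (hu : 0 < u) ↦ ?_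
  simp only [neg_mul, neg_neg, abs_neg, abs_of_pos hu, euler, mul_left_comm]

variable [CompleteSpace E]

theorem cosTransform_cosTransform {g : ℝ → E} {t : ℝ} (hg : IntegrableOn g (Ioi 0))
    (hTg : IntegrableOn (cosTransform g) (Ioi 0)) (ht : 0 ≤ t)
    (hcont : ContinuousWithinAt g (Ici 0) t) :
    cosTransform (cosTransform g) t = (π / 2) • g t := by
  let G : ℝ → E := fun ξ ↦ (2 : ℝ) • cosTransform g (2 * π * ξ)
  have hG : IntegrableOn G (Ioi 0) := by
    have h := (integrableOn_Ioi_comp_mul_left_iff (cosTransform g) 0 two_pi_pos).2 (by simpa)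
    exact h.smul (2 : ℝ)
  have hFourier : 𝓕 (fun u ↦ g |u|) = fun ξ ↦ G |ξ| := by
    ext ξ
    rw [fourier_comp_abs hg, ← cosTransform_abs, abs_mul, abs_of_pos two_pi_pos]
  have hcont' : ContinuousAt (fun u ↦ g |u|) t := by
    rw [← abs_of_nonneg ht] at hcont
    rw [← continuousWithinAt_univ]
    exact hcont.comp continuous_abs.continuousWithinAt fun u _ ↦ abs_nonneg u
  have hinv : g t = (2 / π) • cosTransform (cosTransform g) t := calc
    g t = 𝓕⁻ (𝓕 fun u ↦ g |u|) t := by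
      rw [(integrable_comp_abs hg).fourierInv_fourier_eq
        (hFourier ▸ integrable_comp_abs hG) hcont', abs_of_nonneg ht]
    _ = (2 : ℝ) • cosTransform G (2 * π * t) := by
      rw [hFourier, Real.fourierInv_eq_fourier_neg, fourier_comp_abs hG, mul_neg, cosTransform_neg]
    _ = (2 / π) • cosTransform (cosTransform g) t := by
      rw [cosTransform_const_smul, cosTransform_comp_mul_left _ two_pi_pos, smul_smul, smul_smul]
      congr 1
      field_simp
  rw [hinv, smul_smul, div_mul_div_cancel₀ two_ne_zero, div_self pi_ne_zero, one_smul]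

theorem cosTransform_cosTransform_real {g : ℝ → ℝ} {t : ℝ} (hg : IntegrableOn g (Ioi 0))
    (hTg : IntegrableOn (cosTransform g) (Ioi 0)) (ht : 0 ≤ t)
    (hcont : ContinuousWithinAt g (Ici 0) t) :
    cosTransform (cosTransform g) t = π / 2 * g t := by
  have hT : cosTransform (fun u ↦ (g u : ℂ)) = fun ω ↦ ((cosTransform g ω : ℝ) : ℂ) :=
    funext (cosTransform_ofReal g)
  have h := cosTransform_cosTransform (g := fun u ↦ (g u : ℂ)) hg.ofReal (hT ▸ hTg.ofReal) ht
    (Complex.continuous_ofReal.continuousAt.comp_continuousWithinAt hcont)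
  rw [hT, cosTransform_ofReal, Complex.real_smul] at h
  exact_mod_cast h

end CosTransform

section LaplaceTransform

/-- The Laplace transform `F(s) = ∫₀^∞ f(u) e^{-su} du` of a real function; the values of `f` on
`(-∞, 0)` are ignored. -/
noncomputable def laplaceTransform (f : ℝ → ℝ) (s : ℂ) : ℂ :=
  ∫ u in Ici (0 : ℝ), (f u : ℂ) * Complex.exp (-s * (u : ℂ))

theorem re_laplaceTransform {a : ℝ} {f : ℝ → ℝ}
    (hint : IntegrableOn (fun u ↦ exp (-a * u) * f u) (Ici 0)) (ω : ℝ) :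
    (laplaceTransform f (a + ω * Complex.I)).re =
      cosTransform (fun u ↦ exp (-a * u) * f u) ω := by
  have hsplit (u : ℝ) : (f u : ℂ) * Complex.exp (-(a + ω * Complex.I) * u) =
      Complex.exp (((-(u * ω) : ℝ) : ℂ) * Complex.I) * ((exp (-a * u) * f u : ℝ) : ℂ) := by
    push_cast
    rw [← mul_assoc, ← Complex.exp_add, mul_comm]
    ring_nf
  have hintegrable : IntegrableOn
      (fun u : ℝ ↦ (f u : ℂ) * Complex.exp (-(a + ω * Complex.I) * u)) (Ici 0) := by
    simp only [hsplit]
    refine hint.ofReal.bdd_mul (c := 1) (Continuous.aestronglyMeasurable (by fun_prop)) ?_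
    exact .of_forall fun u ↦ (Complex.norm_exp_ofReal_mul_I _).le
  rw [laplaceTransform, cosTransform, ← integral_Ici_eq_integral_Ioi]
  refine (integral_re hintegrable).symm.trans (integral_congr_ae (.of_forall fun u ↦ ?_))
  simp only [hsplit, RCLike.re_to_complex, Complex.re_mul_ofReal, Complex.exp_ofReal_mul_I_re,
    cos_neg, smul_eq_mul]

theorem laplace_inversion_fourier_cosine_general {a t : ℝ} {f : ℝ → ℝ}
    (hint : IntegrableOn (fun u ↦ exp (-a * u) * f u) (Ici 0))
    (hint2 : IntegrableOn (fun ω : ℝ ↦ (laplaceTransform f (a + ω * Complex.I)).re) (Ici 0))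
    (ht : 0 ≤ t) (hcont : ContinuousWithinAt f (Ici 0) t) :
    f t = 2 * exp (a * t) / π *
      ∫ ω in Ici (0 : ℝ), (laplaceTransform f (a + ω * Complex.I)).re * cos (ω * t) := by
  have hinv := cosTransform_cosTransform_real (hint.mono_set Ioi_subset_Ici_self)
    ((hint2.mono_set Ioi_subset_Ici_self).congr_fun (fun ω _ ↦ re_laplaceTransform hint ω)
      measurableSet_Ioi) ht
    (.mul (Continuous.continuousWithinAt (by fun_prop)) hcont)
  have hcos : ∫ ω in Ici (0 : ℝ), (laplaceTransform f (a + ω * Complex.I)).re * cos (ω * t) =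
      cosTransform (cosTransform fun u ↦ exp (-a * u) * f u) t := by
    simp only [re_laplaceTransform hint, integral_Ici_eq_integral_Ioi, mul_comm _ (cos _)]
    rfl
  rw [hcos, hinv, neg_mul, exp_neg]
  field_simp

end LaplaceTransform

/-- **Laplace inversion via the Fourier cosine transform**: under the stated
integrability and continuity assumptions, for every `t > 0`,
`f(t) = (2 e^{at}/π) ∫₀^∞ Re F(a + iω) cos(ωt) dω`, where
`F(s) = ∫₀^∞ f(t) e^{−st} dt` is the Laplace transform of `f`. -/
theorem laplace_inversion_fourier_cosine (a : ℝ) (f : ℝ → ℝ)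
    (hzero : ∀ t < (0 : ℝ), f t = 0)
    (hcont : ContinuousOn f (Set.Ioi 0))
    (hint : IntegrableOn (fun t => Real.exp (-a * t) * f t) (Set.Ici 0))
    (hint2 : IntegrableOn
      (fun ω : ℝ => (∫ u in Set.Ici (0 : ℝ),
        (f u : ℂ) * Complex.exp (-((a : ℂ) + (ω : ℂ) * Complex.I) * (u : ℂ))).re)
      (Set.Ici 0)) :
    ∀ t > (0 : ℝ),
      f t = (2 * Real.exp (a * t) / Real.pi) *
        ∫ ω in Set.Ici (0 : ℝ),
          (∫ u in Set.Ici (0 : ℝ),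
            (f u : ℂ) * Complex.exp (-((a : ℂ) + (ω : ℂ) * Complex.I) * (u : ℂ))).re
            * Real.cos (ω * t) :=
  fun _ ht ↦ laplace_inversion_fourier_cosine_general hint hint2 ht.le
    (hcont.continuousAt (Ioi_mem_nhds ht)).continuousWithinAt
end

section
/- Conservation of total mechanical energy for linear bond-based peridynamics with clamped volume constraints: let Ω and Ω_τ be disjoint bounded measurable subsets of ℝⁿ, ρ > 0 a constant, and C : ℝⁿ → ℝ^{n×n} a bounded measurable micromodulus with C(−ξ) = C(ξ) and C(ξ)ᵀ = C(ξ) for all ξ. Let u : ℝⁿ × ℝ → ℝⁿ be twice continuously differentiable in t, with u, ∂_t u, ∂²_t u bounded on (Ω ∪ Ω_τ) × K for every compact K ⊂ ℝ, satisfying ρ ∂²_t u(x,t) = ∫_{Ω∪Ω_τ} C(x' − x)·(u(x',t) − u(x,t)) dx' for all x ∈ Ω and t ∈ ℝ, and u(x,t) = 0 for all x ∈ Ω_τ and t ∈ ℝ. Define the total energy E(t) = (1/4) ∫_{Ω∪Ω_τ} ∫_{Ω∪Ω_τ} (u(x',t) − u(x,t)) · C(x' − x)·(u(x',t) − u(x,t))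 dx' dx + (1/2) ∫_{Ω∪Ω_τ} ρ |∂_t u(x,t)|² dx. Then E(t) is constant in t. -/
open MeasureTheory Matrix

/-- Total mechanical energy of a linear bond-based peridynamic body:
elastic energy plus kinetic energy. -/
noncomputable def pdTotalEnergy {n : ℕ} (Ω Ωτ : Set (Fin n → ℝ)) (ρ : ℝ)
    (C : (Fin n → ℝ) → Matrix (Fin n) (Fin n) ℝ)
    (u : (Fin n → ℝ) → ℝ → (Fin n → ℝ)) (t : ℝ) : ℝ :=
  (1 / 4) * (∫ x in Ω ∪ Ωτ, ∫ x' in Ω ∪ Ωτ,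
      (u x' t - u x t) ⬝ᵥ (C (x' - x)).mulVec (u x' t - u x t))
    + (1 / 2) * ∫ x in Ω ∪ Ωτ, ρ * (∑ i, (deriv (u x) t i) ^ 2)

/-!
Differentiating the energy under the integral sign and using the symmetry of `C ξ`, the elastic
term contributes `½ ∬ (v x' - v x) ⬝ᵥ C (x' - x) *ᵥ (u x' - u x)`, where `v` is the velocity.
Since `C` is even, exchanging `x` and `x'` turns this into
`-∫ v x ⬝ᵥ (∫ C (x' - x) *ᵥ (u x' - u x) dx') dx`, the nonlocal analogue of Green's identity.
This cancels the derivative `∫ v x ⬝ᵥ ρ • a x dx` of the kinetic term: on `Ω` by the equation of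
motion, on `Ωτ` because `v` vanishes there.
-/

open Topology
open scoped ENNReal

section ParametricIntegral

variable {α E F G : Type*} [MeasurableSpace α] {μ : Measure α}
  [NormedAddCommGroup E] [NormedSpace ℝ E] [NormedAddCommGroup F] [NormedSpace ℝ F]
  [NormedAddCommGroup G] [NormedSpace ℝ G]

theorem aestronglyMeasurable_of_hasDerivAt {f : α → ℝ → E} {f' : α → E} {t : ℝ}
    (hf : ∀ s, AEStronglyMeasurable (f · s) μ) (hf' : ∀ᵐ x ∂μ, HasDerivAt (f x) (f' x) t) :
    AEStronglyMeasurable f' μ := by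
  refine aestronglyMeasurable_of_tendsto_ae (𝓝[>] (0 : ℝ))
    (f := fun h x => h⁻¹ • (f x (t + h) - f x t))
    (fun h => ((hf (t + h)).sub (hf t)).const_smul h⁻¹) ?_
  filter_upwards [hf'] with x hx using hx.tendsto_slope_zero_right

theorem memLp_clm_apply {p q r : ℝ≥0∞} [p.HolderTriple q r] {T : α → E →L[ℝ] F} {w : α → E}
    (hT : MemLp T p μ) (hw : MemLp w q μ) : MemLp (fun x => T x (w x)) r μ :=
  (ContinuousLinearMap.id ℝ (E →L[ℝ] F)).memLp_of_bilin (f := T) (g := w) r hT hw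

theorem memLp_top_clm_apply₂ {B : α → E →L[ℝ] F →L[ℝ] G} {w : α → E} {z : α → F}
    (hB : MemLp B ∞ μ) (hw : MemLp w ∞ μ) (hz : MemLp z ∞ μ) :
    MemLp (fun x => B x (w x) (z x)) ∞ μ :=
  have hBw : MemLp (fun x => B x (w x)) ∞ μ := memLp_clm_apply (F := F →L[ℝ] G) hB hw
  memLp_clm_apply hBw hz

/-- The time-dependent fields `f` with velocity `f'` that can be differentiated under the integral
sign over a finite measure: `f` and `f'` are essentially bounded on a neighbourhood of each time,
uniformly in space. -/
structure HasBoundedDeriv (μ : Measure α) (f f' : α → ℝ → E) : Prop where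
  aestronglyMeasurable : ∀ t, AEStronglyMeasurable (f · t) μ
  hasDerivAt : ∀ᵐ x ∂μ, ∀ t, HasDerivAt (f x) (f' x t) t
  bounded : ∀ t, ∃ U ∈ 𝓝 t, ∃ M, ∀ᵐ x ∂μ, ∀ s ∈ U, ‖f x s‖ ≤ M ∧ ‖f' x s‖ ≤ M

namespace HasBoundedDeriv

variable {f f' : α → ℝ → E}

theorem memLp_top (hf : HasBoundedDeriv μ f f') (t : ℝ) : MemLp (f · t) ∞ μ := by
  obtain ⟨U, hU, M, hM⟩ := hf.bounded t
  refine memLp_top_of_bound (hf.aestronglyMeasurable t) M ?_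
  filter_upwards [hM] with x hx using (hx t (mem_of_mem_nhds hU)).1

theorem memLp_top_deriv (hf : HasBoundedDeriv μ f f') (t : ℝ) : MemLp (f' · t) ∞ μ := by
  obtain ⟨U, hU, M, hM⟩ := hf.bounded t
  refine memLp_top_of_bound (aestronglyMeasurable_of_hasDerivAt hf.aestronglyMeasurable
    (hf.hasDerivAt.mono fun x hx => hx t)) M ?_
  filter_upwards [hM] with x hx using (hx t (mem_of_mem_nhds hU)).2

theorem hasDerivAt_integral [IsFiniteMeasure μ] (hf : HasBoundedDeriv μ f f') (t : ℝ) :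
    HasDerivAt (fun s => ∫ x, f x s ∂μ) (∫ x, f' x t ∂μ) t := by
  obtain ⟨U, hU, M, hM⟩ := hf.bounded t
  exact (hasDerivAt_integral_of_dominated_loc_of_deriv_le hU (.of_forall hf.aestronglyMeasurable)
    ((hf.memLp_top t).integrable le_top) (hf.memLp_top_deriv t).1
    (hM.mono fun x hx s hs => (hx s hs).2) (integrable_const M)
    (hf.hasDerivAt.mono fun x hx s _ => hx s)).2

theorem comp_quasiMeasurePreserving {β : Type*} [MeasurableSpace β] {κ : Measure β} {φ : β → α}
    (hf : HasBoundedDeriv μ f f') (hφ : Measure.QuasiMeasurePreserving φ κ μ) :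
    HasBoundedDeriv κ (fun y => f (φ y)) fun y => f' (φ y) where
  aestronglyMeasurable t := (hf.aestronglyMeasurable t).comp_quasiMeasurePreserving hφ
  hasDerivAt := hφ.ae hf.hasDerivAt
  bounded t := by
    obtain ⟨U, hU, M, hM⟩ := hf.bounded t
    exact ⟨U, hU, M, hφ.ae hM⟩

theorem sub {g g' : α → ℝ → E} (hf : HasBoundedDeriv μ f f') (hg : HasBoundedDeriv μ g g') :
    HasBoundedDeriv μ (fun x t => f x t - g x t) fun x t => f' x t - g' x t where
  aestronglyMeasurable t := (hf.aestronglyMeasurable t).sub (hg.aestronglyMeasurable t)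
  hasDerivAt := by
    filter_upwards [hf.hasDerivAt, hg.hasDerivAt] with x hfx hgx t using (hfx t).sub (hgx t)
  bounded t := by
    obtain ⟨U, hU, M, hM⟩ := hf.bounded t
    obtain ⟨V, hV, N, hN⟩ := hg.bounded t
    refine ⟨U ∩ V, Filter.inter_mem hU hV, M + N, ?_⟩
    filter_upwards [hM, hN] with x hfx hgx s hs
    exact ⟨norm_sub_le_of_le (hfx s hs.1).1 (hgx s hs.2).1,
      norm_sub_le_of_le (hfx s hs.1).2 (hgx s hs.2).2⟩

theorem clm_apply₂ {g g' : α → ℝ → F} {B : α → E →L[ℝ] F →L[ℝ] G} (hB : MemLp B ∞ μ)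
    (hf : HasBoundedDeriv μ f f') (hg : HasBoundedDeriv μ g g') :
    HasBoundedDeriv μ (fun x t => B x (f x t) (g x t))
      fun x t => B x (f x t) (g' x t) + B x (f' x t) (g x t) where
  aestronglyMeasurable t := (memLp_top_clm_apply₂ hB (hf.memLp_top t) (hg.memLp_top t)).1
  hasDerivAt := by
    filter_upwards [hf.hasDerivAt, hg.hasDerivAt] with x hfx hgx t
    exact (B x).hasDerivAt_of_bilinear (fun _ => hfx t) fun _ => hgx t
  bounded t := by
    obtain ⟨U, hU, M, hM⟩ := hf.bounded t
    obtain ⟨V, hV, N, hN⟩ := hg.bounded t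
    set b := lpNorm B ∞ μ
    have hb : 0 ≤ b := lpNorm_nonneg
    refine ⟨U ∩ V, Filter.inter_mem hU hV, b * M * N + b * M * N, ?_⟩
    have hB_le : ∀ᵐ x ∂μ, ‖B x‖ ≤ b := ae_le_lpNorm_exponent_top (E := E →L[ℝ] F →L[ℝ] G) hB
    filter_upwards [hM, hN, hB_le] with x hfx hgx hBx s hs
    obtain ⟨hf_le, hf'_le⟩ := hfx s hs.1
    obtain ⟨hg_le, hg'_le⟩ := hgx s hs.2
    have hM0 : 0 ≤ M := (norm_nonneg _).trans hf_le
    have hN0 : 0 ≤ N := (norm_nonneg _).trans hg_le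
    have apply_le {y : E} {z : F} (hy : ‖y‖ ≤ M) (hz : ‖z‖ ≤ N) : ‖B x y z‖ ≤ b * M * N :=
      ((B x).le_opNorm₂ y z).trans (by gcongr)
    exact ⟨(apply_le hf_le hg_le).trans (le_add_of_nonneg_left (by positivity)),
      norm_add_le_of_le (apply_le hf_le hg'_le) (apply_le hf'_le hg_le)⟩

theorem quadratic {B : α → E →L[ℝ] E →L[ℝ] G}
    (hB : MemLp B ∞ μ) (hBsymm : ∀ x y z, B x y z = B x z y) (hf : HasBoundedDeriv μ f f') :
    HasBoundedDeriv μ (fun x t => B x (f x t) (f x t))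
      fun x t => (2 : ℝ) • B x (f' x t) (f x t) := by
  simpa only [hBsymm _ (f _ _) (f' _ _), ← two_smul ℝ] using hf.clm_apply₂ hB hf

end HasBoundedDeriv

theorem hasBoundedDeriv_deriv {D : Set α} (hD : MeasurableSet D) {f : α → ℝ → E}
    (hf : ∀ t, AEStronglyMeasurable (f · t) (μ.restrict D))
    (hdiff : ∀ x ∈ D, Differentiable ℝ (f x))
    (hbdd : ∀ K : Set ℝ, IsCompact K → ∃ M : ℝ,
      ∀ x ∈ D, ∀ t ∈ K, ‖f x t‖ ≤ M ∧ ‖deriv (f x) t‖ ≤ M) :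
    HasBoundedDeriv (μ.restrict D) f fun x => deriv (f x) where
  aestronglyMeasurable := hf
  hasDerivAt := by
    filter_upwards [ae_restrict_mem hD] with x hx t using (hdiff x hx t).hasDerivAt
  bounded t := by
    obtain ⟨M, hM⟩ := hbdd (Metric.closedBall t 1) (isCompact_closedBall t 1)
    refine ⟨_, Metric.closedBall_mem_nhds t one_pos, M, ?_⟩
    filter_upwards [ae_restrict_mem hD] with x hx using hM x hx

end ParametricIntegral

section NonlocalEnergy

variable {α E : Type*} [MeasurableSpace α] [NormedAddCommGroup E] [NormedSpace ℝ E]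

/-- The energy of a nonlocal linear system at time `t`: `B (x, x')` is the stiffness form of the
bond from `x` to `x'`, and `m x` the mass form at `x`. The factor `1 / 4` combines the `1 / 2` of a
quadratic energy with the `1 / 2` for counting each bond twice. -/
noncomputable def nonlocalEnergy (μ : Measure α) (B : α × α → E →L[ℝ] E →L[ℝ] ℝ)
    (m : α → E →L[ℝ] E →L[ℝ] ℝ) (u v : α → ℝ → E) (t : ℝ) : ℝ :=
  (1 / 4) * (∫ x, ∫ x', B (x, x') (u x' t - u x t) (u x' t - u x t) ∂μ ∂μ) +
    (1 / 2) * ∫ x, m x (v x t) (v x t) ∂μ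

variable {μ : Measure α} [IsFiniteMeasure μ]
  {B : α × α → E →L[ℝ] E →L[ℝ] ℝ} {m : α → E →L[ℝ] E →L[ℝ] ℝ}

theorem integral_prod_sub_sub_eq_neg_two_mul {w z : α → E} (hB : MemLp B ∞ (μ.prod μ))
    (hBswap : ∀ p, B p.swap = B p) (hw : MemLp w ∞ μ) (hz : MemLp z ∞ μ) :
    ∫ p, B p (w p.2 - w p.1) (z p.2 - z p.1) ∂μ.prod μ =
      -2 * ∫ x, ∫ x', B (x, x') (w x) (z x' - z x) ∂μ ∂μ := by
  set g : α × α → ℝ := fun p => B p (w p.1) (z p.2 - z p.1)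
  have hg : Integrable g (μ.prod μ) :=
    (memLp_top_clm_apply₂ hB (hw.comp_fst μ) ((hz.comp_snd μ).sub (hz.comp_fst μ))).integrable
      le_top
  calc ∫ p, B p (w p.2 - w p.1) (z p.2 - z p.1) ∂μ.prod μ
      = ∫ p, (-g p.swap - g p) ∂μ.prod μ := by
        refine integral_congr_ae (.of_forall fun p => ?_)
        simp only [g, hBswap, Prod.fst_swap, Prod.snd_swap, map_sub, _root_.sub_apply]
        ring
    _ = -2 * ∫ p, g p ∂μ.prod μ := by
        have hswap : Integrable (fun p => -g p.swap) (μ.prod μ) := hg.swap.neg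
        rw [integral_sub hswap hg, integral_neg, integral_prod_swap]
        ring
    _ = -2 * ∫ x, ∫ x', B (x, x') (w x) (z x' - z x) ∂μ ∂μ := by rw [integral_prod g hg]

theorem hasDerivAt_nonlocalEnergy {u v a : α → ℝ → E}
    (hB : MemLp B ∞ (μ.prod μ)) (hBsymm : ∀ p y z, B p y z = B p z y)
    (hBswap : ∀ p, B p.swap = B p)
    (hm : MemLp m ∞ μ) (hmsymm : ∀ x y z, m x y z = m x z y)
    (hu : HasBoundedDeriv μ u v) (hv : HasBoundedDeriv μ v a) (t : ℝ) :
    HasDerivAt (nonlocalEnergy μ B m u v)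
      (∫ x, m x (a x t) (v x t) ∂μ - ∫ x, ∫ x', B (x, x') (v x t) (u x' t - u x t) ∂μ ∂μ) t := by
  have hstretch : HasBoundedDeriv (μ.prod μ) (fun p s => u p.2 s - u p.1 s)
      fun p s => v p.2 s - v p.1 s :=
    (hu.comp_quasiMeasurePreserving Measure.quasiMeasurePreserving_snd).sub
      (hu.comp_quasiMeasurePreserving Measure.quasiMeasurePreserving_fst)
  have helastic := hstretch.quadratic hB hBsymm
  have hkinetic := hv.quadratic hm hmsymm
  have henergy : nonlocalEnergy μ B m u v = fun s =>
      (1 / 4) * (∫ p, B p (u p.2 s - u p.1 s) (u p.2 s - u p.1 s) ∂μ.prod μ) +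
        (1 / 2) * ∫ x, m x (v x s) (v x s) ∂μ :=
    funext fun s => by
      rw [nonlocalEnergy, integral_prod _ ((helastic.memLp_top s).integrable le_top)]
  rw [henergy]
  refine (((helastic.hasDerivAt_integral t).const_mul (1 / 4)).add
    ((hkinetic.hasDerivAt_integral t).const_mul (1 / 2))).congr_deriv ?_
  simp only [smul_eq_mul, integral_const_mul]
  rw [integral_prod_sub_sub_eq_neg_two_mul hB hBswap (hu.memLp_top_deriv t) (hu.memLp_top t)]
  ring

theorem nonlocalEnergy_eq_of_power_balance {u v a : α → ℝ → E}
    (hB : MemLp B ∞ (μ.prod μ)) (hBsymm : ∀ p y z, B p y z = B p z y)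
    (hBswap : ∀ p, B p.swap = B p)
    (hm : MemLp m ∞ μ) (hmsymm : ∀ x y z, m x y z = m x z y)
    (hu : HasBoundedDeriv μ u v) (hv : HasBoundedDeriv μ v a)
    (hbalance : ∀ t, ∀ᵐ x ∂μ, m x (a x t) (v x t) = ∫ x', B (x, x') (v x t) (u x' t - u x t) ∂μ)
    (t₁ t₂ : ℝ) :
    nonlocalEnergy μ B m u v t₁ = nonlocalEnergy μ B m u v t₂ := by
  have hderiv (t : ℝ) : HasDerivAt (nonlocalEnergy μ B m u v) 0 t := by
    refine (hasDerivAt_nonlocalEnergy hB hBsymm hBswap hm hmsymm hu hv t).congr_deriv ?_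
    rw [integral_congr_ae (hbalance t), sub_self]
  exact is_const_of_deriv_eq_zero (fun t => (hderiv t).differentiableAt)
    (fun t => (hderiv t).deriv) t₁ t₂

end NonlocalEnergy

section MatrixForm

variable {α ι : Type*} [MeasurableSpace α] {μ : Measure α} [Fintype ι]

theorem memLp_sum_smul {E : Type*} [NormedAddCommGroup E] [NormedSpace ℝ E] {p : ℝ≥0∞}
    {f : ι → α → ℝ} {c : ι → E} (hf : ∀ i, MemLp (f i) p μ) :
    MemLp (fun x => ∑ i, f i x • c i) p μ :=
  memLp_finsetSum _ fun i _ =>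
    ((ContinuousLinearMap.id ℝ ℝ).smulRight (c i)).comp_memLp' (hf i)

/-- The bilinear form `(w, z) ↦ w ⬝ᵥ A *ᵥ z` of a matrix, as a continuous bilinear map. It is
written in coordinates so that integrability is inherited from the entries of `A`. -/
noncomputable def matrixForm (A : Matrix ι ι ℝ) : (ι → ℝ) →L[ℝ] (ι → ℝ) →L[ℝ] ℝ :=
  ∑ ij : ι × ι, A ij.1 ij.2 • (ContinuousLinearMap.proj ij.1 : (ι → ℝ) →L[ℝ] ℝ).smulRight
    (ContinuousLinearMap.proj ij.2 : (ι → ℝ) →L[ℝ] ℝ)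

theorem matrixForm_apply (A : Matrix ι ι ℝ) (w z : ι → ℝ) : matrixForm A w z = w ⬝ᵥ A *ᵥ z := by
  simp [matrixForm, dotProduct, mulVec, Finset.mul_sum, mul_left_comm, Fintype.sum_prod_type]

theorem matrixForm_comm {A : Matrix ι ι ℝ} (hA : A.IsSymm) (w z : ι → ℝ) :
    matrixForm A w z = matrixForm A z w := by
  rw [matrixForm_apply, matrixForm_apply, dotProduct_mulVec, ← mulVec_transpose, hA.eq,
    dotProduct_comm]

theorem memLp_matrixForm {p : ℝ≥0∞} {K : α → Matrix ι ι ℝ} (hK : ∀ i j, MemLp (K · i j) p μ) :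
    MemLp (fun x => matrixForm (K x)) p μ :=
  memLp_sum_smul (E := (ι → ℝ) →L[ℝ] (ι → ℝ) →L[ℝ] ℝ) fun ij => hK ij.1 ij.2

theorem memLp_mulVec {p q r : ℝ≥0∞} [q.HolderTriple p r] {K : α → Matrix ι ι ℝ}
    {z : α → ι → ℝ} (hK : ∀ i j, MemLp (K · i j) p μ) (hz : MemLp z q μ) :
    MemLp (fun x => K x *ᵥ z x) r μ :=
  MemLp.of_eval fun i => memLp_finsetSum _ fun j _ => (hz.eval j).mul' (hK i j)

theorem dotProduct_integral {f : α → ι → ℝ} (hf : Integrable f μ) (w : ι → ℝ) :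
    w ⬝ᵥ ∫ x, f x ∂μ = ∫ x, w ⬝ᵥ f x ∂μ := by
  simp only [dotProduct]
  rw [integral_finsetSum _ fun i _ => (hf.eval i).const_mul (w i)]
  simp only [integral_const_mul, eval_integral hf.eval]

end MatrixForm

theorem pdTotalEnergy_eq_nonlocalEnergy {n : ℕ} (Ω Ωτ : Set (Fin n → ℝ)) (ρ : ℝ)
    (C : (Fin n → ℝ) → Matrix (Fin n) (Fin n) ℝ) (u : (Fin n → ℝ) → ℝ → (Fin n → ℝ)) :
    pdTotalEnergy Ω Ωτ ρ C u =
      nonlocalEnergy (volume.restrict (Ω ∪ Ωτ)) (fun p => matrixForm (C (p.2 - p.1)))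
        (fun _ => matrixForm (ρ • 1)) u fun x => deriv (u x) := by
  have hkinetic (w : Fin n → ℝ) : matrixForm (ρ • 1) w w = ρ * ∑ i, w i ^ 2 := by
    rw [matrixForm_apply, smul_mulVec, one_mulVec, dotProduct_smul, smul_eq_mul]
    simp only [dotProduct, pow_two]
  funext t
  simp only [pdTotalEnergy, nonlocalEnergy, hkinetic, matrixForm_apply]

theorem pd_energy_conservation_general {n : ℕ}
    (Ω Ωτ : Set (Fin n → ℝ)) (hΩ : MeasurableSet Ω) (hΩτ : MeasurableSet Ωτ)
    (hfin : volume (Ω ∪ Ωτ) ≠ ∞)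
    (ρ : ℝ)
    (C : (Fin n → ℝ) → Matrix (Fin n) (Fin n) ℝ)
    (hCmeas : ∀ i j, Measurable fun ξ => C ξ i j)
    (hCbdd : ∃ M : ℝ, ∀ ξ i j, |C ξ i j| ≤ M)
    (hCeven : ∀ ξ, C (-ξ) = C ξ)
    (hCsymm : ∀ ξ, (C ξ)ᵀ = C ξ)
    (u : (Fin n → ℝ) → ℝ → (Fin n → ℝ))
    (humeas : ∀ t, AEStronglyMeasurable (u · t) (volume.restrict (Ω ∪ Ωτ)))
    (hu : ∀ x ∈ Ω ∪ Ωτ, Differentiable ℝ (u x))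
    (hv : ∀ x ∈ Ω ∪ Ωτ, Differentiable ℝ (deriv (u x)))
    (hubdd : ∀ K : Set ℝ, IsCompact K → ∃ M : ℝ,
      ∀ x ∈ Ω ∪ Ωτ, ∀ t ∈ K,
        ‖u x t‖ ≤ M ∧ ‖deriv (u x) t‖ ≤ M ∧ ‖deriv (deriv (u x)) t‖ ≤ M)
    (heq : ∀ x ∈ Ω, ∀ t : ℝ,
      ρ • deriv (deriv (u x)) t
        = ∫ x' in Ω ∪ Ωτ, (C (x' - x)).mulVec (u x' t - u x t))
    (hrest : ∀ x ∈ Ωτ, ∀ t : ℝ, deriv (u x) t = 0) :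
    ∀ t₁ t₂ : ℝ, pdTotalEnergy Ω Ωτ ρ C u t₁ = pdTotalEnergy Ω Ωτ ρ C u t₂ := by
  have hD : MeasurableSet (Ω ∪ Ωτ) := hΩ.union hΩτ
  have : IsFiniteMeasure (volume.restrict (Ω ∪ Ωτ)) := isFiniteMeasure_restrict.2 hfin
  have hU : HasBoundedDeriv (volume.restrict (Ω ∪ Ωτ)) u fun x => deriv (u x) :=
    hasBoundedDeriv_deriv hD humeas hu fun K hK =>
      (hubdd K hK).imp fun M hM x hx t ht => ⟨(hM x hx t ht).1, (hM x hx t ht).2.1⟩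
  have hV : HasBoundedDeriv (volume.restrict (Ω ∪ Ωτ)) (fun x => deriv (u x))
      fun x => deriv (deriv (u x)) :=
    hasBoundedDeriv_deriv hD (fun t => (hU.memLp_top_deriv t).1) hv fun K hK =>
      (hubdd K hK).imp fun M hM x hx t ht => (hM x hx t ht).2
  obtain ⟨M, hM⟩ := hCbdd
  rw [pdTotalEnergy_eq_nonlocalEnergy]
  refine nonlocalEnergy_eq_of_power_balance
    (memLp_matrixForm fun i j => memLp_top_of_bound
      ((hCmeas i j).comp (measurable_snd.sub measurable_fst)).aestronglyMeasurable M
      (.of_forall fun p => hM (p.2 - p.1) i j))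
    (fun p => matrixForm_comm (hCsymm _))
    (fun p => by rw [← hCeven, Prod.fst_swap, Prod.snd_swap, neg_sub])
    (memLp_matrixForm fun _ _ => memLp_top_const _)
    (fun _ => matrixForm_comm (isSymm_one.smul ρ)) hU hV fun t => ?_
  filter_upwards [ae_restrict_mem hD] with x hx
  have hforce : Integrable (fun x' => C (x' - x) *ᵥ (u x' t - u x t))
      (volume.restrict (Ω ∪ Ωτ)) :=
    (memLp_mulVec (fun i j => memLp_top_of_bound
      ((hCmeas i j).comp (measurable_sub_const x)).aestronglyMeasurable M
      (.of_forall fun x' => hM (x' - x) i j))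
      ((hU.memLp_top t).sub (memLp_top_const _))).integrable le_top
  rcases hx with hx | hx
  · simp only [matrixForm_apply, smul_mulVec, one_mulVec]
    rw [← dotProduct_integral hforce, ← heq x hx t, dotProduct_smul, dotProduct_smul,
      dotProduct_comm]
  · simp [hrest x hx t]

/-- **Conservation of total mechanical energy for linear bond-based peridynamics
with clamped volume constraints.** -/
theorem pd_energy_conservation {n : ℕ} (hn : 1 ≤ n)
    (Ω Ωτ : Set (Fin n → ℝ)) (hΩ : MeasurableSet Ω) (hΩτ : MeasurableSet Ωτ)
    (hΩbdd : Bornology.IsBounded Ω) (hΩτbdd : Bornology.IsBounded Ωτ)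
    (hdisj : Disjoint Ω Ωτ)
    (ρ : ℝ) (hρ : 0 < ρ)
    (C : (Fin n → ℝ) → Matrix (Fin n) (Fin n) ℝ)
    (hCmeas : ∀ i j, Measurable fun ξ => C ξ i j)
    (hCbdd : ∃ M : ℝ, ∀ ξ i j, |C ξ i j| ≤ M)
    (hCeven : ∀ ξ, C (-ξ) = C ξ)
    (hCsymm : ∀ ξ, (C ξ)ᵀ = C ξ)
    (u : (Fin n → ℝ) → ℝ → (Fin n → ℝ))
    (humeas : Measurable fun p : (Fin n → ℝ) × ℝ => u p.1 p.2)
    (hu2 : ∀ x, ContDiff ℝ 2 (u x))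
    (hubdd : ∀ K : Set ℝ, IsCompact K → ∃ M : ℝ,
      ∀ x ∈ Ω ∪ Ωτ, ∀ t ∈ K,
        ‖u x t‖ ≤ M ∧ ‖deriv (u x) t‖ ≤ M ∧ ‖deriv (deriv (u x)) t‖ ≤ M)
    (heq : ∀ x ∈ Ω, ∀ t : ℝ,
      ρ • deriv (deriv (u x)) t
        = ∫ x' in Ω ∪ Ωτ, (C (x' - x)).mulVec (u x' t - u x t))
    (hclamp : ∀ x ∈ Ωτ, ∀ t : ℝ, u x t = 0) :
    ∀ t₁ t₂ : ℝ, pdTotalEnergy Ω Ωτ ρ C u t₁ = pdTotalEnergy Ω Ωτ ρ C u t₂ :=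
  pd_energy_conservation_general Ω Ωτ hΩ hΩτ (hΩbdd.union hΩτbdd).measure_lt_top.ne ρ C
    hCmeas hCbdd hCeven hCsymm u (fun t => by fun_prop)
    (fun x _ => (hu2 x).differentiable two_ne_zero) (fun x _ => (hu2 x).differentiable_deriv_two)
    hubdd heq fun x hx t => by simp [funext (hclamp x hx)]
end
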